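/- Let 1 ≤ S < n and λ > 0, and condition on an outcome of M_n for which there is a subset B ⊆ {1,…,n} of size n − S such that M_n[{S+1,…,n}, B] is λ-heavy. Then with probability at least 1 − 3S·2^{−S} − e^{−S/6}, there is a set B' of size n + 2S with {1,…,n} ⊆ B' ⊆ {1,…,n+3S} such that the matrix M_{n+3S}[{S+1,…,n+3S}, B'] is λ-heavy. -/

import Mathlib

open Finset

/-- The real number (`1` or `-1`) associated to a Boolean: a Rademacher value. -/
noncomputable def rad (b : Bool) : ℝ := if b then 1 else -1

/-- The permanent of the submatrix of `M` with row set `A` and column set `B`,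
defined as a sum over all bijections between `A` and `B` (it equals `0` if
`A.card ≠ B.card`). Since the permanent is invariant under row and column
permutations, this faithfully represents `per M[A,B]`. -/
noncomputable def permOn {m n : ℕ} (M : Matrix (Fin m) (Fin n) ℝ)
    (A : Finset (Fin m)) (B : Finset (Fin n)) : ℝ :=
  ∑ σ : {x // x ∈ A} ≃ {y // y ∈ B}, ∏ i : {x // x ∈ A}, M i.1 (σ i).1

/-- The random symmetric extension of a fixed `n' × n'` matrix `M` to an `n × n` matrix:
the top-left `n' × n'` block is `M`, and the remaining entries are Rademacher values
determined symmetrically by the Boolean data `ω`. As `ω` ranges uniformly over all Boolean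
data, the new entries (on and above the diagonal) are i.i.d. Rademacher random variables. -/
noncomputable def extSym {n' : ℕ} (n : ℕ) (M : Matrix (Fin n') (Fin n') ℝ)
    (ω : Fin n → Fin n → Bool) : Matrix (Fin n) (Fin n) ℝ :=
  fun i j =>
    if h : (i : ℕ) < n' ∧ (j : ℕ) < n' then M ⟨i, h.1⟩ ⟨j, h.2⟩
    else if i ≤ j then rad (ω i j) else rad (ω j i)

open Classical in
/-- The probability of the event `P` for the random symmetric extension of `M` to size `n`
(i.e. conditionally on the outcome `M` for the top-left block). -/
noncomputable def probExt {n' : ℕ} (n : ℕ) (M : Matrix (Fin n') (Fin n') ℝ)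
    (P : Matrix (Fin n) (Fin n) ℝ → Prop) : ℝ :=
  ((univ.filter fun ω : Fin n → Fin n → Bool => P (extSym n M ω)).card : ℝ) / 2 ^ (n * n)

/-!
The matrix grows by one row and column at a time. While it has size `m`, we keep a set `B` of
`m - S` columns for which `M[{S+1,…,m}, B]` is `λ`-heavy, so exactly `S` columns are unused.

When row `m + 1` is revealed, the Laplace expansion gives, for each unused column `b`,
`per M[{S+1,…,m+1}, B ∪ {b}] = x_{m+1,b} · per M[{S+1,…,m}, B] + (terms free of x_{m+1,b})`.
Given the entries of the row in the columns of `B`, at most one sign of `x_{m+1,b}` therefore makes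
the new permanent light, independently over `b`: a set `C` of unused columns contains no admissible
one with probability at most `2^{-|C|}`. So a step is stuck with probability at most `2^{-S}`, while
as long as one of the first `n` columns is missing from `B`, such a column can be added with
probability at least `1/2`.

The first `n` columns start with `S` of them missing, so within `3S` steps the procedure fails with
probability at most `3S · 2^{-S} + P(Bin(3S, 1/2) < S)`, and Hoeffding's inequality bounds the
binomial tail by `e^{-S/6}`.
-/

open scoped BigOperators

section Permanent

variable {m n : ℕ} {X Y : Matrix (Fin m) (Fin n) ℝ} {A : Finset (Fin m)} {B : Finset (Fin n)}
  {a : Fin m} {b : Fin n}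

lemma permOn_congr (h : ∀ i ∈ A, ∀ j ∈ B, X i j = Y i j) : permOn X A B = permOn Y A B :=
  sum_congr rfl fun σ _ => prod_congr rfl fun i _ => h i i.2 (σ i) (σ i).2

lemma permOn_map {m' n' : ℕ} {Z : Matrix (Fin m') (Fin n') ℝ} (f : Fin m ↪ Fin m')
    (g : Fin n ↪ Fin n') (h : ∀ i j, Z (f i) (g j) = X i j) :
    permOn Z (A.map f) (B.map g) = permOn X A B := by
  unfold permOn
  rw [← Equiv.sum_comp (Equiv.equivCongr (A.equivMap f) (B.equivMap g))]
  refine sum_congr rfl fun σ _ => ?_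
  rw [← Equiv.prod_comp (A.equivMap f)]
  refine prod_congr rfl fun i _ => ?_
  simp only [Equiv.equivCongr_apply_apply, Equiv.symm_apply_apply]
  exact h _ _

lemma permOn_insert_eq_sum_option (ha : a ∉ A) :
    permOn X (insert a A) B = ∑ τ : Option A ≃ B, X a (τ none) * ∏ i : A, X i (τ (some i)) := by
  unfold permOn
  rw [← Equiv.sum_comp ((subtypeInsertEquivOption ha).symm.equivCongr (Equiv.refl _))]
  refine sum_congr rfl fun τ _ => ?_
  rw [← Equiv.prod_comp (subtypeInsertEquivOption ha).symm, Fintype.prod_option]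
  simp only [Equiv.equivCongr_apply_apply, Equiv.symm_symm, Equiv.apply_symm_apply,
    Equiv.refl_apply]
  rfl

lemma permOn_erase_eq_sum (b : B) :
    permOn X A (B.erase b) = ∑ τ : A ≃ {y : B // y ≠ b}, ∏ i : A, X i (τ i).1 := by
  let e : {y : B // y ≠ b} ≃ {y // y ∈ B.erase b} :=
    { toFun := fun y => ⟨y.1, mem_erase.2 ⟨fun h => y.2 (Subtype.ext h), y.1.2⟩⟩
      invFun := fun y => ⟨⟨y, mem_of_mem_erase y.2⟩,
        fun h => ne_of_mem_erase y.2 (congrArg Subtype.val h)⟩ }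
  exact (Equiv.sum_comp ((Equiv.refl _).equivCongr e) _).symm

theorem permOn_insert_left (ha : a ∉ A) :
    permOn X (insert a A) B = ∑ b ∈ B, X a b * permOn X A (B.erase b) := by
  rw [permOn_insert_eq_sum_option ha, ← Fintype.sum_fiberwise (fun τ : Option A ≃ B => τ none),
    ← sum_coe_sort B]
  refine sum_congr rfl fun b _ => ?_
  rw [permOn_erase_eq_sum, mul_sum, ← Equiv.sum_comp (Equiv.optionSubtype b).symm]
  simp only [Equiv.optionSubtype_symm_apply_apply_none, Equiv.optionSubtype_symm_apply_apply_coe]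

theorem permOn_insert_insert_sub (ha : a ∉ A) (hb : b ∉ B)
    (hA : ∀ i ∈ A, ∀ j ∈ insert b B, X i j = Y i j) (hrow : ∀ j ∈ B, X a j = Y a j) :
    permOn X (insert a A) (insert b B) - permOn Y (insert a A) (insert b B)
      = (X a b - Y a b) * permOn X A B := by
  have hminor (c : Fin n) : permOn X A ((insert b B).erase c) = permOn Y A ((insert b B).erase c) :=
    permOn_congr fun i hi j hj => hA i hi j (mem_of_mem_erase hj)
  have hrest : ∑ c ∈ B, X a c * permOn X A ((insert b B).erase c)
      = ∑ c ∈ B, Y a c * permOn Y A ((insert b B).erase c) :=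
    sum_congr rfl fun c hc => by rw [hrow c hc, hminor]
  rw [permOn_insert_left ha, permOn_insert_left ha, sum_insert hb, sum_insert hb, hrest,
    ← hminor b, erase_insert hb]
  ring

lemma le_abs_permOn_or_le_abs_permOn {lam : ℝ} (ha : a ∉ A) (hb : b ∉ B)
    (hA : ∀ i ∈ A, ∀ j ∈ insert b B, X i j = Y i j) (hrow : ∀ j ∈ B, X a j = Y a j)
    (hab : |X a b - Y a b| = 2) (hheavy : lam ≤ |permOn X A B|) :
    lam ≤ |permOn X (insert a A) (insert b B)| ∨ lam ≤ |permOn Y (insert a A) (insert b B)| := by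
  by_contra! hlight
  have hdiff := abs_sub (permOn X (insert a A) (insert b B)) (permOn Y (insert a A) (insert b B))
  rw [permOn_insert_insert_sub ha hb hA hrow, abs_mul, hab] at hdiff
  linarith

end Permanent

lemma card_mul_card_pow_le_of_eqOn_compl {ι α : Type*} [Fintype ι] [Fintype α]
    {E : Finset (ι → α)} {C : Finset ι} (hE : ∀ v ∈ E, ∀ w ∈ E, (∀ i ∉ C, v i = w i) → v = w) :
    #E * Fintype.card α ^ #C ≤ Fintype.card α ^ Fintype.card ι := by
  classical
  have hcard : #E ≤ Fintype.card ({i // i ∈ Cᶜ} → α) := by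
    refine card_le_card_of_injOn (fun v i => v i) (fun _ _ => mem_univ _) fun v hv w hw hvw => ?_
    exact hE v hv w hw fun i hi => congrFun hvw ⟨i, mem_compl.2 hi⟩
  calc #E * Fintype.card α ^ #C
      ≤ Fintype.card α ^ #Cᶜ * Fintype.card α ^ #C := by
        gcongr
        rwa [Fintype.card_fun, Fintype.card_coe] at hcard
    _ = Fintype.card α ^ Fintype.card ι := by rw [← pow_add, card_compl_add_card]

section Extension

variable {n m N : ℕ} {M : Matrix (Fin n) (Fin n) ℝ}

/-- The array `ω` with its top-left block replaced by `ω'`. -/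
def overwriteBlock {α : Type*} (ω' : Fin m → Fin m → α) (ω : Fin N → Fin N → α) :
    Fin N → Fin N → α :=
  fun i j => if h : (i : ℕ) < m ∧ (j : ℕ) < m then ω' ⟨i, h.1⟩ ⟨j, h.2⟩ else ω i j

/-- Exchanging `ω'` with the top-left block of `ω` is an involution on the pairs `(ω', ω)`. -/
lemma expect_overwriteBlock {α E : Type*} [Fintype α] [Nonempty α] [AddCommMonoid E]
    [Module ℚ≥0 E] (hmN : m ≤ N) (F : (Fin N → Fin N → α) → E) :
    𝔼 ω' : Fin m → Fin m → α, 𝔼 ω, F (overwriteBlock ω' ω) = 𝔼 ω, F ω := by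
  let swap (p : (Fin m → Fin m → α) × (Fin N → Fin N → α)) :
      (Fin m → Fin m → α) × (Fin N → Fin N → α) :=
    (fun i j => p.2 (i.castLE hmN) (j.castLE hmN), overwriteBlock p.1 p.2)
  have hswap : Function.Involutive swap := by
    rintro ⟨ω', ω⟩
    refine Prod.ext ?_ ?_
    · funext i j
      simp [swap, overwriteBlock]
    · funext i j
      simp only [swap, overwriteBlock, Fin.castLE_mk, Fin.eta]
      split_ifs <;> rfl
  calc 𝔼 ω' : Fin m → Fin m → α, 𝔼 ω, F (overwriteBlock ω' ω)
      = 𝔼 p : (Fin m → Fin m → α) × (Fin N → Fin N → α), F (swap p).2 := by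
        rw [← univ_product_univ, expect_product]
    _ = 𝔼 p : (Fin m → Fin m → α) × (Fin N → Fin N → α), F p.2 :=
        Fintype.expect_equiv hswap.toPerm _ _ fun _ => rfl
    _ = 𝔼 ω, F ω := by
        rw [← univ_product_univ, expect_product]
        exact Fintype.expect_const (𝔼 ω, F ω)

lemma extSym_extSym (hnm : n ≤ m) (ω' : Fin m → Fin m → Bool) (ω : Fin N → Fin N → Bool) :
    extSym N (extSym m M ω') ω = extSym N M (overwriteBlock ω' ω) := by
  funext i j
  simp only [extSym, overwriteBlock, Fin.le_def]
  split_ifs <;> first | rfl | omega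

lemma extSym_self (ω : Fin n → Fin n → Bool) : extSym n M ω = M := by
  funext i j
  simp [extSym]

open Classical in
lemma probExt_eq_expect (P : Matrix (Fin N) (Fin N) ℝ → Prop) :
    probExt N M P = 𝔼 ω, if P (extSym N M ω) then (1 : ℝ) else 0 := by
  rw [probExt, Fintype.expect_eq_sum_div_card, sum_boole]
  simp [pow_mul]

theorem probExt_eq_expect_probExt (hnm : n ≤ m) (hmN : m ≤ N)
    (P : Matrix (Fin N) (Fin N) ℝ → Prop) :
    probExt N M P = 𝔼 ω' : Fin m → Fin m → Bool, probExt N (extSym m M ω') P := by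
  classical
  simp only [probExt_eq_expect, extSym_extSym hnm]
  exact (expect_overwriteBlock hmN fun ω => if P (extSym N M ω) then (1 : ℝ) else 0).symm

lemma probExt_add_probExt_not (P : Matrix (Fin N) (Fin N) ℝ → Prop) :
    probExt N M P + probExt N M (fun M' => ¬ P M') = 1 := by
  classical
  rw [probExt_eq_expect, probExt_eq_expect, ← expect_add_distrib]
  refine (expect_congr rfl fun ω _ => ?_).trans Fintype.expect_one
  split_ifs <;> simp

lemma probExt_nonneg (P : Matrix (Fin N) (Fin N) ℝ → Prop) : 0 ≤ probExt N M P := by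
  unfold probExt
  positivity

lemma probExt_le_one (P : Matrix (Fin N) (Fin N) ℝ → Prop) : probExt N M P ≤ 1 := by
  rw [← probExt_add_probExt_not P]
  exact le_add_of_nonneg_right (probExt_nonneg _)

open Classical in
lemma probExt_le_add_mul_add (hnm : n ≤ m) (hmN : m ≤ N) {P : Matrix (Fin N) (Fin N) ℝ → Prop}
    {E F : Matrix (Fin m) (Fin m) ℝ → Prop} {α β : ℝ}
    (h : ∀ M', probExt N M' P ≤ α + β * (if E M' then 1 else 0) + if F M' then 1 else 0) :
    probExt N M P ≤ α + β * probExt m M E + probExt m M F := by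
  rw [probExt_eq_expect_probExt hnm hmN, probExt_eq_expect E, probExt_eq_expect F, mul_expect]
  rw [← Fintype.expect_const (ι := Fin m → Fin m → Bool) α, ← expect_add_distrib,
    ← expect_add_distrib]
  exact expect_le_expect fun ω _ => h _

lemma probExt_le_half_pow_card {P : Matrix (Fin N) (Fin N) ℝ → Prop} (C : Finset (Fin N × Fin N))
    (hP : ∀ ω ω', P (extSym N M ω) → P (extSym N M ω') →
      (∀ i j, (i, j) ∉ C → ω i j = ω' i j) → ω = ω') :
    probExt N M P ≤ (1 / 2) ^ #C := by
  classical
  let E : Finset (Fin N × Fin N → Bool) :=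
    univ.filter fun v => P (extSym N M (Function.curry v))
  have hE : #E * 2 ^ #C ≤ 2 ^ (N * N) := by
    refine (card_mul_card_pow_le_of_eqOn_compl (C := C) fun v hv w hw hvw => ?_).trans_eq
      (by simp)
    exact (Equiv.curry _ _ _).injective (hP _ _ (mem_filter.1 hv).2 (mem_filter.1 hw).2
      fun i j hij => hvw (i, j) hij)
  have hcard : #{ω : Fin N → Fin N → Bool | P (extSym N M ω)} = #E :=
    (card_equiv (Equiv.curry _ _ _) (by simp [E])).symm
  rw [probExt, one_div_pow, div_le_div_iff₀ (by positivity) (by positivity), one_mul, hcard]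
  exact_mod_cast hE

end Extension

section BinomialTail

/-- The probability that a binomial random variable with parameters `r` and `1/2` is smaller
than `d`. -/
noncomputable def binomialLowerTail (r d : ℕ) : ℝ :=
  (∑ k ∈ range d, (r.choose k : ℝ)) / 2 ^ r

@[simp]
lemma binomialLowerTail_zero_right (r : ℕ) : binomialLowerTail r 0 = 0 := by
  simp [binomialLowerTail]

lemma binomialLowerTail_zero_succ (d : ℕ) : binomialLowerTail 0 (d + 1) = 1 := by
  simp [binomialLowerTail, sum_range_succ']

lemma binomialLowerTail_succ_succ (r d : ℕ) :
    binomialLowerTail (r + 1) (d + 1)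
      = (binomialLowerTail r d + binomialLowerTail r (d + 1)) / 2 := by
  have hpascal : ∑ k ∈ range (d + 1), ((r + 1).choose k : ℝ)
      = ∑ k ∈ range d, (r.choose k : ℝ) + ∑ k ∈ range (d + 1), (r.choose k : ℝ) := by
    rw [sum_range_succ' _ d, sum_range_succ' _ d, ← add_assoc, ← sum_add_distrib]
    simp only [Nat.choose_succ_succ, Nat.cast_add, Nat.choose_zero_right]
  unfold binomialLowerTail
  rw [hpascal, pow_succ]
  ring

lemma binomialLowerTail_mono (r : ℕ) : Monotone (binomialLowerTail r) := fun d e hde => by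
  unfold binomialLowerTail
  gcongr

lemma binomialLowerTail_nonneg (r d : ℕ) : 0 ≤ binomialLowerTail r d := by
  unfold binomialLowerTail
  positivity

/-- At `d = 0`, truncated subtraction makes `d - 1 = 0` and both sides vanish. -/
lemma binomialLowerTail_mix_le {r d : ℕ} {p : ℝ} (hp : p ≤ (1 / 2) ^ d) :
    binomialLowerTail r (d - 1) + (binomialLowerTail r d - binomialLowerTail r (d - 1)) * p
      ≤ binomialLowerTail (r + 1) d := by
  cases d with
  | zero => simp
  | succ d =>
    have hp_half : p ≤ 1 / 2 := hp.trans (pow_le_of_le_one (by norm_num) (by norm_num) (by simp))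
    have hmono := binomialLowerTail_mono r d.le_succ
    rw [Nat.add_sub_cancel, binomialLowerTail_succ_succ]
    linarith [mul_le_mul_of_nonneg_left hp_half (sub_nonneg.2 hmono)]

lemma binomialLowerTail_le_exp_mul {s : ℝ} (hs : 0 ≤ s) (r d : ℕ) :
    binomialLowerTail r d ≤ Real.exp (s * d) * ((1 + Real.exp (-s)) / 2) ^ r := by
  induction r generalizing d with
  | zero =>
    cases d with
    | zero => simp
    | succ d =>
      rw [binomialLowerTail_zero_succ, pow_zero, mul_one]
      exact Real.one_le_exp (by positivity)
  | succ r ih =>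
    cases d with
    | zero => rw [binomialLowerTail_zero_right]; positivity
    | succ d =>
      have hexp : Real.exp (s * d) = Real.exp (s * (d + 1 : ℕ)) * Real.exp (-s) := by
        rw [← Real.exp_add]
        push_cast
        ring_nf
      calc binomialLowerTail (r + 1) (d + 1)
          = (binomialLowerTail r d + binomialLowerTail r (d + 1)) / 2 :=
            binomialLowerTail_succ_succ r d
        _ ≤ (Real.exp (s * d) * ((1 + Real.exp (-s)) / 2) ^ r
              + Real.exp (s * (d + 1 : ℕ)) * ((1 + Real.exp (-s)) / 2) ^ r) / 2 := by
            gcongr <;> apply ih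
        _ = Real.exp (s * (d + 1 : ℕ)) * ((1 + Real.exp (-s)) / 2) ^ (r + 1) := by
            rw [hexp]
            ring

lemma one_add_exp_neg_div_two_le (s : ℝ) :
    (1 + Real.exp (-s)) / 2 ≤ Real.exp (s ^ 2 / 8 - s / 2) := by
  calc (1 + Real.exp (-s)) / 2 = Real.exp (-(s / 2)) * Real.cosh (s / 2) := by
        rw [Real.cosh_eq, mul_div_assoc', mul_add, ← Real.exp_add, ← Real.exp_add, neg_add_cancel,
          Real.exp_zero, ← neg_add, add_halves]
    _ ≤ Real.exp (-(s / 2)) * Real.exp ((s / 2) ^ 2 / 2) := by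
        gcongr
        exact Real.cosh_le_exp_half_sq _
    _ = Real.exp (s ^ 2 / 8 - s / 2) := by
        rw [← Real.exp_add]
        ring_nf

/-- Hoeffding's inequality. At `r = 0` the exponent is `0 / 0 = 0`. -/
theorem binomialLowerTail_le_exp {r d : ℕ} (hdr : 2 * d ≤ r) :
    binomialLowerTail r d ≤ Real.exp (-((r : ℝ) - 2 * d) ^ 2 / (2 * r)) := by
  rcases r.eq_zero_or_pos with rfl | hr
  · obtain rfl : d = 0 := by omega
    simp
  have hdr_real : (0 : ℝ) ≤ r - 2 * d := sub_nonneg.2 (by exact_mod_cast hdr)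
  -- the minimiser of the exponent `s * d + r * (s ^ 2 / 8 - s / 2)`
  set s : ℝ := 2 * (r - 2 * d) / r with hs
  calc binomialLowerTail r d
      ≤ Real.exp (s * d) * ((1 + Real.exp (-s)) / 2) ^ r :=
        binomialLowerTail_le_exp_mul (by positivity) r d
    _ ≤ Real.exp (s * d) * Real.exp (s ^ 2 / 8 - s / 2) ^ r := by
        gcongr
        exact one_add_exp_neg_div_two_le s
    _ = Real.exp (-((r : ℝ) - 2 * d) ^ 2 / (2 * r)) := by
        rw [← Real.exp_nat_mul, ← Real.exp_add, hs]
        congr 1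
        field_simp
        ring

lemma binomialLowerTail_three_mul_le (S : ℕ) :
    binomialLowerTail (3 * S) S ≤ Real.exp (-(S : ℝ) / 6) := by
  refine (binomialLowerTail_le_exp (by omega)).trans_eq ?_
  rcases S.eq_zero_or_pos with rfl | hS
  · simp
  congr 1
  push_cast
  field_simp
  ring

end BinomialTail

section Growth

variable {n m S : ℕ} {lam : ℝ} {M : Matrix (Fin m) (Fin m) ℝ} {B : Finset (Fin m)}

/-- `B` has size `m - S` and `M[{S+1,…,m}, B]` is `lam`-heavy; the size is specified without
truncated subtraction. -/
def IsHeavy (S : ℕ) (lam : ℝ) (M : Matrix (Fin m) (Fin m) ℝ) (B : Finset (Fin m)) : Prop :=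
  #B + S = m ∧ lam ≤ |permOn M (univ.filter fun i : Fin m => S ≤ (i : ℕ)) B|

/-- The event to be shown likely: some heavy column set contains the first `n` columns. -/
def HasHeavyCover (n S : ℕ) (lam : ℝ) (M : Matrix (Fin m) (Fin m) ℝ) : Prop :=
  ∃ B, IsHeavy S lam M B ∧ ∀ i : Fin m, (i : ℕ) < n → i ∈ B

/-- The columns among the first `n` that still have to be added to `B`. -/
def missing (n : ℕ) (B : Finset (Fin m)) : Finset (Fin m) :=
  univ.filter fun i => (i : ℕ) < n ∧ i ∉ B

/-- The column set of an `(m + 1) × (m + 1)` matrix obtained from `B` by adding the old column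
`b`. -/
def grow (B : Finset (Fin m)) (b : Fin m) : Finset (Fin (m + 1)) :=
  (insert b B).map Fin.castSuccEmb

/-- After the row `m + 1` has been revealed, no column from `C` can be added to `B`. -/
def IsStuck (S : ℕ) (lam : ℝ) (B C : Finset (Fin m))
    (M' : Matrix (Fin (m + 1)) (Fin (m + 1)) ℝ) : Prop :=
  ∀ b ∈ C, ¬ IsHeavy S lam M' (grow B b)

lemma hasHeavyCover_iff {k : ℕ} (hk : k + S = m) :
    HasHeavyCover n S lam M ↔ ∃ B : Finset (Fin m), #B = k ∧ (∀ i : Fin m, (i : ℕ) < n → i ∈ B) ∧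
      lam ≤ |permOn M (univ.filter fun i : Fin m => S ≤ (i : ℕ)) B| :=
  exists_congr fun B => by
    have hcard : #B + S = m ↔ #B = k := by omega
    rw [IsHeavy, hcard, and_assoc, and_comm (a := lam ≤ _)]

lemma IsHeavy.hasHeavyCover (hB : IsHeavy S lam M B) (hmiss : missing n B = ∅) :
    HasHeavyCover n S lam M := by
  refine ⟨B, hB, fun i hi => ?_⟩
  by_contra hiB
  have hmem : i ∈ missing n B := by simp [missing, hi, hiB]
  simp [hmiss] at hmem

lemma missing_subset_compl : missing n B ⊆ Bᶜ := fun i hi => by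
  simp only [missing, mem_filter] at hi
  simpa using hi.2.2

lemma missing_grow (hnm : n ≤ m) (b : Fin m) :
    missing n (grow B b) = ((missing n B).erase b).map Fin.castSuccEmb := by
  ext i
  cases i using Fin.lastCases with
  | last => simp [missing, hnm]
  | cast i =>
    simp only [missing, grow, map_insert, Fin.coe_castSuccEmb, mem_insert, mem_map, not_or,
      not_exists, not_and, mem_filter, mem_univ, Fin.val_castSucc, Fin.castSucc_inj,
      forall_mem_not_eq', true_and, map_erase, mem_erase, ne_eq, exists_eq_right]
    tauto

lemma filter_le_succ_eq_insert_last (hSm : S ≤ m) :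
    (univ.filter fun i : Fin (m + 1) => S ≤ (i : ℕ))
      = insert (Fin.last m) ((univ.filter fun i : Fin m => S ≤ (i : ℕ)).map Fin.castSuccEmb) := by
  ext i
  cases i using Fin.lastCases <;> simp [hSm]

lemma abs_rad_sub_rad {s t : Bool} (h : s ≠ t) : |rad s - rad t| = 2 := by
  cases s <;> cases t <;> simp_all [rad] <;> norm_num

lemma extSym_succ_castSucc_castSucc (ω : Fin (m + 1) → Fin (m + 1) → Bool) (i j : Fin m) :
    extSym (m + 1) M ω i.castSucc j.castSucc = M i j := by
  simp [extSym]

lemma extSym_succ_last_castSucc (ω : Fin (m + 1) → Fin (m + 1) → Bool) (j : Fin m) :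
    extSym (m + 1) M ω (Fin.last m) j.castSucc = rad (ω j.castSucc (Fin.last m)) := by
  simp [extSym, (Fin.castSucc_lt_last j).not_ge]

lemma IsHeavy.grow_or_grow (hB : IsHeavy S lam M B) {b : Fin m} (hb : b ∉ B)
    {ω ω' : Fin (m + 1) → Fin (m + 1) → Bool}
    (hrow : ∀ j ∈ B, ω j.castSucc (Fin.last m) = ω' j.castSucc (Fin.last m))
    (hne : ω b.castSucc (Fin.last m) ≠ ω' b.castSucc (Fin.last m)) :
    IsHeavy S lam (extSym (m + 1) M ω) (grow B b)
      ∨ IsHeavy S lam (extSym (m + 1) M ω') (grow B b) := by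
  have hcard : #(grow B b) + S = m + 1 := by
    rw [grow, card_map, card_insert_of_notMem hb, add_right_comm, hB.1]
  refine (?_ : _ ∨ _).imp (And.intro hcard) (And.intro hcard)
  rw [grow, map_insert, filter_le_succ_eq_insert_last (hB.1 ▸ Nat.le_add_left S #B)]
  refine le_abs_permOn_or_le_abs_permOn (by simp) (by simpa using hb) ?_ ?_ ?_ ?_
  · rw [← map_insert]
    simp only [forall_mem_map, Fin.coe_castSuccEmb, extSym_succ_castSucc_castSucc, implies_true]
  · simp only [forall_mem_map, Fin.coe_castSuccEmb, extSym_succ_last_castSucc]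
    exact fun j hj => congrArg rad (hrow j hj)
  · simp only [Fin.coe_castSuccEmb, extSym_succ_last_castSucc]
    exact abs_rad_sub_rad hne
  · rw [permOn_map _ _ (extSym_succ_castSucc_castSucc ω)]
    exact hB.2

/-- Two sign patterns failing for every `b ∈ C` and agreeing off the entries `(b, m)`, `b ∈ C`, are
equal by `IsHeavy.grow_or_grow`. -/
theorem IsHeavy.probExt_isStuck_le (hB : IsHeavy S lam M B) {C : Finset (Fin m)}
    (hC : C ⊆ Bᶜ) :
    probExt (m + 1) M (IsStuck S lam B C) ≤ (1 / 2) ^ #C := by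
  let f : Fin m ↪ Fin (m + 1) × Fin (m + 1) :=
    ⟨fun b => (b.castSucc, Fin.last m), fun b c h => by simpa using h⟩
  rw [← card_map f]
  refine probExt_le_half_pow_card _ fun ω ω' hω hω' hagree => ?_
  have hagree_B : ∀ j ∈ B, ω j.castSucc (Fin.last m) = ω' j.castSucc (Fin.last m) :=
    fun j hj => hagree _ _ fun hjC => by
      obtain ⟨c, hc, hcj⟩ := mem_map.1 hjC
      obtain rfl : c = j := by exact Fin.castSucc_injective m (congrArg Prod.fst hcj)
      exact mem_compl.1 (hC hc) hj
  funext i j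
  by_contra hne
  obtain ⟨b, hb, hbij⟩ : ∃ b ∈ C, f b = (i, j) := by
    by_contra hij
    exact hne (hagree i j (mt mem_map.1 hij))
  obtain ⟨rfl, rfl⟩ := Prod.ext_iff.1 hbij
  exact (hB.grow_or_grow (mem_compl.1 (hC hb)) hagree_B hne).elim (hω b hb) (hω' b hb)

open Classical in
lemma probExt_le_of_forall_isHeavy {N r : ℕ} {P : Matrix (Fin N) (Fin N) ℝ → Prop} {c : ℝ}
    (hnm : n ≤ m) (hc : 0 ≤ c) (M' : Matrix (Fin (m + 1)) (Fin (m + 1)) ℝ)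
    (h : ∀ B', IsHeavy S lam M' B' → probExt N M' P ≤ c + binomialLowerTail r #(missing n B')) :
    probExt N M' P ≤ c + binomialLowerTail r (#(missing n B) - 1)
      + (binomialLowerTail r #(missing n B) - binomialLowerTail r (#(missing n B) - 1))
        * (if IsStuck S lam B (missing n B) M' then 1 else 0)
      + if IsStuck S lam B Bᶜ M' then 1 else 0 := by
  have hcard (b : Fin m) : #(missing n (grow B b)) = #((missing n B).erase b) := by
    rw [missing_grow hnm, card_map]
  have htail := binomialLowerTail_nonneg r #(missing n B)
  by_cases hmiss : IsStuck S lam B (missing n B) M'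
  · by_cases hstuck : IsStuck S lam B Bᶜ M'
    · rw [if_pos hmiss, if_pos hstuck]
      linarith [probExt_le_one (M := M') P]
    · rw [if_pos hmiss, if_neg hstuck]
      obtain ⟨b, -, hb⟩ : ∃ b ∈ Bᶜ, IsHeavy S lam M' (grow B b) := by
        simpa [IsStuck] using hstuck
      have hnext := h _ hb
      have hmono := binomialLowerTail_mono r (card_erase_le (s := missing n B) (a := b))
      rw [hcard] at hnext
      linarith
  · have hnot_stuck : ¬ IsStuck S lam B Bᶜ M' :=
      fun hstuck => hmiss fun b hb => hstuck b (missing_subset_compl hb)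
    rw [if_neg hmiss, if_neg hnot_stuck]
    obtain ⟨b, hb_missing, hb⟩ : ∃ b ∈ missing n B, IsHeavy S lam M' (grow B b) := by
      simpa [IsStuck] using hmiss
    have hnext := h _ hb
    rw [hcard, card_erase_of_mem hb_missing] at hnext
    linarith

/-- The row `m + 1` is stuck for the missing columns with probability at most
`2 ^ (-#(missing n B))` and stuck for all unused columns with probability at most `2 ^ (-S)`. -/
lemma IsHeavy.probExt_le_of_succ {N r : ℕ} {P : Matrix (Fin N) (Fin N) ℝ → Prop} {c : ℝ}
    (hB : IsHeavy S lam M B) (hnm : n ≤ m) (hmN : m + 1 ≤ N) (hc : 0 ≤ c)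
    (h : ∀ (M' : Matrix (Fin (m + 1)) (Fin (m + 1)) ℝ) (B' : Finset (Fin (m + 1))),
      IsHeavy S lam M' B' → probExt N M' P ≤ c + binomialLowerTail r #(missing n B')) :
    probExt N M P ≤ c + (1 / 2) ^ S + binomialLowerTail (r + 1) #(missing n B) := by
  classical
  have hcompl : #Bᶜ = S := by
    rw [card_compl, Fintype.card_fin]
    have := hB.1
    omega
  have hmiss := hB.probExt_isStuck_le (missing_subset_compl (n := n))
  have hstuck := hB.probExt_isStuck_le Subset.rfl
  have hbound := probExt_le_add_mul_add (M := M) m.le_succ hmN fun M' =>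
    probExt_le_of_forall_isHeavy (B := B) hnm hc M' (h M')
  rw [hcompl] at hstuck
  linarith [binomialLowerTail_mix_le (r := r) hmiss]

theorem IsHeavy.probExt_not_hasHeavyCover_le {N r : ℕ} (hB : IsHeavy S lam M B) (hnm : n ≤ m)
    (hN : m + r = N) :
    probExt N M (fun M' => ¬ HasHeavyCover n S lam M')
      ≤ r * (1 / 2) ^ S + binomialLowerTail r #(missing n B) := by
  induction r generalizing m with
  | zero =>
    obtain rfl : m = N := hN
    rcases (missing n B).eq_empty_or_nonempty with hmiss | hmiss
    · simp [probExt, extSym_self, hB.hasHeavyCover hmiss, hmiss]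
    · obtain ⟨d, hd⟩ := Nat.exists_eq_add_one.2 hmiss.card_pos
      rw [hd, binomialLowerTail_zero_succ, Nat.cast_zero, zero_mul, zero_add]
      exact probExt_le_one _
  | succ r ih =>
    have hstep := hB.probExt_le_of_succ hnm (by omega) (by positivity) fun M' B' hB' =>
      ih hB' (by omega) (by omega)
    push_cast
    linarith

end Growth

theorem iterative_cover_general (n S : ℕ) (hSn : S ≤ n) (lam : ℝ)
    (M : Matrix (Fin n) (Fin n) ℝ)
    (hB : ∃ B : Finset (Fin n), B.card = n - S ∧
      lam ≤ |permOn M (univ.filter fun i : Fin n => S ≤ (i : ℕ)) B|) :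
    1 - 3 * (S : ℝ) * (1 / 2 : ℝ) ^ S - Real.exp (-(S : ℝ) / 6) ≤
      probExt (n + 3 * S) M fun M' => ∃ B' : Finset (Fin (n + 3 * S)),
        B'.card = n + 2 * S ∧ (∀ i : Fin (n + 3 * S), (i : ℕ) < n → i ∈ B') ∧
        lam ≤ |permOn M' (univ.filter fun i : Fin (n + 3 * S) => S ≤ (i : ℕ)) B'| := by
  obtain ⟨B, hBcard, hBheavy⟩ := hB
  have hB : IsHeavy S lam M B := ⟨by omega, hBheavy⟩
  have hmiss : #(missing n B) = S := by
    have hcompl : missing n B = Bᶜ := by ext i; simp [missing]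
    rw [hcompl, card_compl, Fintype.card_fin, hBcard]
    omega
  have hfail := hB.probExt_not_hasHeavyCover_le le_rfl (rfl : n + 3 * S = n + 3 * S)
  have htail := binomialLowerTail_three_mul_le S
  have hone := probExt_add_probExt_not (M := M) (HasHeavyCover (m := n + 3 * S) n S lam)
  rw [hmiss] at hfail
  push_cast at hfail
  simp only [← hasHeavyCover_iff (show n + 2 * S + S = n + 3 * S by ring)]
  linarith

/-- Iterative covering step: let `1 ≤ S < n` and `λ > 0`, and condition on a symmetric `±1`
outcome of `M_n` having a subset `B` of size `n - S` such that `M_n[{S+1,…,n}, B]` is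
`λ`-heavy. Then with probability at least `1 - 3S·2^(-S) - e^(-S/6)` over the random
extension to size `n + 3S`, there is a set `B'` of size `n + 2S` with
`{1,…,n} ⊆ B' ⊆ {1,…,n+3S}` such that `M_{n+3S}[{S+1,…,n+3S}, B']` is `λ`-heavy. -/
theorem iterative_cover (n S : ℕ) (hS1 : 1 ≤ S) (hSn : S < n) (lam : ℝ) (hlam : 0 < lam)
    (M : Matrix (Fin n) (Fin n) ℝ) (hsym : M.IsSymm)
    (hsign : ∀ i j, M i j = 1 ∨ M i j = -1)
    (hB : ∃ B : Finset (Fin n), B.card = n - S ∧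
      lam ≤ |permOn M (univ.filter fun i : Fin n => S ≤ (i : ℕ)) B|) :
    1 - 3 * (S : ℝ) * (1 / 2 : ℝ) ^ S - Real.exp (-(S : ℝ) / 6) ≤
      probExt (n + 3 * S) M fun M' => ∃ B' : Finset (Fin (n + 3 * S)),
        B'.card = n + 2 * S ∧ (∀ i : Fin (n + 3 * S), (i : ℕ) < n → i ∈ B') ∧
        lam ≤ |permOn M' (univ.filter fun i : Fin (n + 3 * S) => S ≤ (i : ℕ)) B'| :=
  iterative_cover_general n S hSn.le lam M hB
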